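/- Fix positive integers S and n and a probability vector Q = (q_1,…,q_S) ∈ M_S. In the Poisson sampling model with sample size n, the maximum likelihood (plug-in) estimator L_1(P_n,Q) = Σ_{i=1}^S |p̂_i − q_i| satisfies sup_{P ∈ M_S} E_P |L_1(P_n,Q) − L_1(P,Q)|² ≤ 4·(Σ_{i=1}^S min{q_i, √(q_i/n)})² + 1/n, and sup_{P ∈ M_S} E_P |L_1(P_n,Q) − L_1(P,Q)|² ≥ (1/2)·(Σ_{i=1}^S min{q_i, √(q_i/n)})². -/

import Mathlib

/-!
Put `λᵢ = n pᵢ` and `cᵢ = n qᵢ`. The error of the plug-in estimator is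
`n⁻¹ ∑ᵢ (|Xᵢ - cᵢ| - |λᵢ - cᵢ|)` with independent `Xᵢ ∼ Po(λᵢ)`, so its mean square is `n⁻²` times
the sum of the variances of the `|Xᵢ - cᵢ|` plus the square of the summed biases
`E|Xᵢ - cᵢ| - |λᵢ - cᵢ|`.

Taking absolute values does not increase a variance, so the variances sum to at most `n`. The
`i`-th bias is nonnegative by Jensen's inequality and at most `2 min(cᵢ, √cᵢ)`: the triangle
inequality gives `2 cᵢ` and the Cauchy–Schwarz inequality gives `2 √cᵢ` when `cᵢ ≥ 1`.

For the lower bound take `P = Q`. The mean absolute deviation of `X ∼ Po(λ)` is at least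
`2 λ P(X = k)` for every `k`. Stirling's formula bounds this below by `(2/e) √λ` for `k = ⌊λ⌋` when
`λ ≥ 1`, and `k = 0` gives `(2/e) λ` otherwise. Finally `(2/e)² ≥ 1/2`.
-/

open scoped BigOperators ENNReal

/-- The Poisson(lam) probability mass function on the nonnegative integers. -/
noncomputable def poissonPMF (lam : ℝ) (k : ℕ) : ℝ :=
  Real.exp (-lam) * lam ^ k / (Nat.factorial k)

/-- `P` is a probability vector on `{1,…,S}` (an element of `M_S`). -/
def IsDist {S : ℕ} (p : Fin S → ℝ) : Prop :=
  (∀ i, 0 ≤ p i) ∧ ∑ i, p i = 1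

/-- Joint pmf of `S` independent coordinates `X_i ~ Poisson(n p_i)` (Poisson sampling model). -/
noncomputable def prodPMF {S : ℕ} (n : ℕ) (p : Fin S → ℝ) (x : Fin S → ℕ) : ℝ :=
  ∏ i, poissonPMF (n * p i) (x i)

/-- The `L₁` distance between two vectors. -/
noncomputable def L1dist {S : ℕ} (p q : Fin S → ℝ) : ℝ :=
  ∑ i, |p i - q i|

/-- The mean squared error `E_P (est(X) - L)²` in the Poisson sampling model, valued in `ℝ≥0∞`. -/
noncomputable def risk {S : ℕ} (n : ℕ) (p : Fin S → ℝ) (L : ℝ) (est : (Fin S → ℕ) → ℝ) : ℝ≥0∞ :=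
  ∑' x : Fin S → ℕ, ENNReal.ofReal (prodPMF n p x * (est x - L) ^ 2)

/-- The plug-in (MLE) estimator `L₁(P_n, Q) = Σ_i |X_i/n - q_i|` with `Q` known. -/
noncomputable def mleEst {S : ℕ} (n : ℕ) (q : Fin S → ℝ) (x : Fin S → ℕ) : ℝ :=
  ∑ i, |(x i : ℝ) / n - q i|

open MeasureTheory Real
open ProbabilityTheory hiding poissonPMF
open scoped ProbabilityTheory NNReal Nat

lemma mul_min_sqrt_div {a : ℝ} (ha : 0 ≤ a) (x : ℝ) :
    a * min x √(x / a) = min (a * x) √(a * x) := by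
  rw [mul_min_of_nonneg _ _ ha, sqrt_mul ha, sqrt_div' x ha, mul_div_left_comm, div_sqrt,
    mul_comm √x]

lemma half_le_sq_two_mul_exp_neg_one : 1 / 2 ≤ (2 * exp (-1)) ^ 2 := by
  have h_sq : exp 1 ^ 2 ≤ 8 := by nlinarith [exp_one_lt_d9, exp_pos 1]
  rw [exp_neg, mul_pow, inv_pow, ← div_eq_mul_inv, div_le_div_iff₀ two_pos (by positivity)]
  linarith

section ProbabilityMeasure

variable {Ω : Type*} {mΩ : MeasurableSpace Ω} {μ : Measure Ω} {Y : Ω → ℝ}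

lemma two_mul_setIntegral_le_integral_abs {s : Set Ω} (hs : MeasurableSet s) (hY : Integrable Y μ)
    (h0 : ∫ ω, Y ω ∂μ = 0) : 2 * ∫ ω in s, Y ω ∂μ ≤ ∫ ω, |Y ω| ∂μ := by
  have h_compl : ∫ ω in sᶜ, Y ω ∂μ = -∫ ω in s, Y ω ∂μ := by
    rw [setIntegral_compl hs hY, h0, zero_sub]
  calc 2 * ∫ ω in s, Y ω ∂μ
    _ = (∫ ω in s, Y ω ∂μ) + -∫ ω in sᶜ, Y ω ∂μ := by rw [h_compl]; ring
    _ ≤ (∫ ω in s, |Y ω| ∂μ) + ∫ ω in sᶜ, |Y ω| ∂μ :=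
        add_le_add ((le_abs_self _).trans abs_integral_le_integral_abs)
          ((neg_le_abs _).trans abs_integral_le_integral_abs)
    _ = ∫ ω, |Y ω| ∂μ := integral_add_compl hs hY.abs

variable [IsProbabilityMeasure μ]

lemma integral_sub_const_sq (hY : MemLp Y 2 μ) (c : ℝ) :
    ∫ ω, (Y ω - c) ^ 2 ∂μ = Var[Y; μ] + (∫ ω, Y ω ∂μ - c) ^ 2 := by
  have h_var := variance_eq_sub (hY.sub (memLp_const c))
  have h_mean : ∫ ω, (Y ω - c) ∂μ = ∫ ω, Y ω ∂μ - c := by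
    rw [integral_sub (hY.integrable one_le_two) (integrable_const c)]
    simp
  simp only [Pi.sub_def, Pi.pow_def, variance_sub_const hY.1, h_mean] at h_var
  linarith

lemma variance_abs_add_sq_integral_abs (hY : MemLp Y 2 μ) :
    Var[fun ω => |Y ω|; μ] + (∫ ω, |Y ω| ∂μ) ^ 2 = Var[Y; μ] + (∫ ω, Y ω ∂μ) ^ 2 := by
  have h_abs : ∫ ω, Y ω ^ 2 ∂μ = Var[fun ω => |Y ω|; μ] + (∫ ω, |Y ω| ∂μ) ^ 2 := by
    simpa [Pi.abs_def] using integral_sub_const_sq hY.abs 0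
  have h_self : ∫ ω, Y ω ^ 2 ∂μ = Var[Y; μ] + (∫ ω, Y ω ∂μ) ^ 2 := by
    simpa using integral_sub_const_sq hY 0
  exact h_abs.symm.trans h_self

lemma variance_abs_le (hY : MemLp Y 2 μ) : Var[fun ω => |Y ω|; μ] ≤ Var[Y; μ] := by
  have h_mean : (∫ ω, Y ω ∂μ) ^ 2 ≤ (∫ ω, |Y ω| ∂μ) ^ 2 :=
    sq_le_sq.2 (abs_integral_le_integral_abs.trans (le_abs_self _))
  linarith [variance_abs_add_sq_integral_abs hY]

lemma sq_integral_abs_le (hY : MemLp Y 2 μ) :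
    (∫ ω, |Y ω| ∂μ) ^ 2 ≤ Var[Y; μ] + (∫ ω, Y ω ∂μ) ^ 2 := by
  linarith [variance_abs_add_sq_integral_abs hY, variance_nonneg (fun ω => |Y ω|) μ]

end ProbabilityMeasure

section ProductMeasure

variable {ι : Type*} [Fintype ι] {X : ι → Type*} {mX : ∀ i, MeasurableSpace (X i)}
  {ν : ∀ i, Measure (X i)} [∀ i, IsProbabilityMeasure (ν i)] {g : ∀ i, X i → ℝ}

lemma memLp_pi_sum {p : ℝ≥0∞} (hg : ∀ i, MemLp (g i) p (ν i)) :
    MemLp (fun x : ∀ i, X i => ∑ i, g i (x i)) p (Measure.pi ν) :=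
  memLp_finsetSum _ fun i _ => (hg i).comp_measurePreserving (measurePreserving_eval ν i)

lemma integral_pi_sum (hg : ∀ i, Integrable (g i) (ν i)) :
    ∫ x, ∑ i, g i (x i) ∂Measure.pi ν = ∑ i, ∫ y, g i y ∂ν i := by
  rw [integral_finsetSum _ fun i _ => integrable_comp_eval (hg i)]
  exact Finset.sum_congr rfl fun i _ => integral_comp_eval (hg i).1

lemma integral_pi_sum_sub_const_sq (hg : ∀ i, MemLp (g i) 2 (ν i)) (c : ℝ) :
    ∫ x, (∑ i, g i (x i) - c) ^ 2 ∂Measure.pi ν =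
      ∑ i, Var[g i; ν i] + (∑ i, ∫ y, g i y ∂ν i - c) ^ 2 := by
  have h_var : Var[fun x => ∑ i, g i (x i); Measure.pi ν] = ∑ i, Var[g i; ν i] := by
    rw [← variance_sum_pi hg, Finset.sum_fn]
  rw [integral_sub_const_sq (memLp_pi_sum hg), h_var,
    integral_pi_sum fun i => (hg i).integrable one_le_two]

end ProductMeasure

section PoissonMoments

variable (r : ℝ≥0)

lemma succ_mul_poissonMeasure_real_singleton (k : ℕ) :
    (k + 1) * Po(r).real {k + 1} = r * Po(r).real {k} := by
  rw [poissonMeasure_real_singleton, poissonMeasure_real_singleton, Nat.factorial_succ]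
  push_cast
  field_simp
  exact pow_succ' _ k

lemma sum_range_poissonMeasure_real_mul_sub (k : ℕ) :
    ∑ j ∈ Finset.range (k + 1), Po(r).real {j} * (r - j) = r * Po(r).real {k} := by
  induction k with
  | zero => simp [mul_comm]
  | succ k ih =>
    rw [Finset.sum_range_succ, ih, ← succ_mul_poissonMeasure_real_singleton]
    push_cast
    ring

lemma integral_natCast_mul_poissonMeasure (f : ℕ → ℝ) :
    ∫ k, k * f k ∂Po(r) = r * ∫ k, f (k + 1) ∂Po(r) := by
  have h_support : Function.support (fun k : ℕ => Po(r).real {k} * (k * f k)) ⊆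
      Set.range Nat.succ := by
    rw [Nat.range_succ]
    exact fun k hk => Nat.pos_of_ne_zero fun h => by simp [h] at hk
  simp only [integral_poissonMeasure, ← poissonMeasure_real_singleton, smul_eq_mul]
  rw [← Nat.succ_injective.tsum_eq h_support, ← tsum_mul_left]
  refine tsum_congr fun k => ?_
  rw [← mul_assoc (r : ℝ), ← succ_mul_poissonMeasure_real_singleton]
  push_cast
  ring

variable {r}

lemma integrable_natCast_mul_poissonMeasure {f : ℕ → ℝ}
    (hf : Integrable (fun k => f (k + 1)) Po(r)) : Integrable (fun k : ℕ => k * f k) Po(r) := by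
  rw [integrable_poissonMeasure_iff] at hf ⊢
  rw [← summable_nat_add_iff 1]
  refine (hf.mul_left (r : ℝ)).congr fun k => ?_
  simp only [← poissonMeasure_real_singleton]
  rw [← mul_assoc (r : ℝ), ← succ_mul_poissonMeasure_real_singleton, norm_mul,
    Real.norm_natCast]
  push_cast
  ring

variable (r)

lemma integrable_natCast_poissonMeasure : Integrable (fun k : ℕ => (k : ℝ)) Po(r) := by
  simpa using integrable_natCast_mul_poissonMeasure (r := r) (f := 1) (integrable_const 1)

lemma integral_natCast_poissonMeasure : ∫ k : ℕ, (k : ℝ) ∂Po(r) = r := by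
  simpa using integral_natCast_mul_poissonMeasure r fun _ => 1

lemma memLp_two_natCast_poissonMeasure : MemLp (fun k : ℕ => (k : ℝ)) 2 Po(r) := by
  rw [memLp_two_iff_integrable_sq .of_discrete]
  have h_succ : Integrable (fun k : ℕ => ((k + 1 : ℕ) : ℝ)) Po(r) := by
    simpa using (integrable_natCast_poissonMeasure r).add (integrable_const (1 : ℝ))
  simpa only [sq] using integrable_natCast_mul_poissonMeasure h_succ

lemma variance_natCast_poissonMeasure : Var[fun k : ℕ => (k : ℝ); Po(r)] = r := by
  have h_sq : ∫ k : ℕ, (k : ℝ) ^ 2 ∂Po(r) = r * (r + 1) := by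
    simp only [sq, integral_natCast_mul_poissonMeasure, Nat.cast_add_one]
    rw [integral_add (integrable_natCast_poissonMeasure r) (integrable_const 1),
      integral_natCast_poissonMeasure]
    simp
  rw [variance_eq_sub (memLp_two_natCast_poissonMeasure r), integral_natCast_poissonMeasure]
  simp only [Pi.pow_apply, h_sq]
  ring

variable (c : ℝ)

lemma memLp_two_natCast_sub_poissonMeasure : MemLp (fun k : ℕ => k - c) 2 Po(r) :=
  (memLp_two_natCast_poissonMeasure r).sub (memLp_const c)

lemma integral_natCast_sub_poissonMeasure : ∫ k : ℕ, (k - c) ∂Po(r) = r - c := by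
  rw [integral_sub (integrable_natCast_poissonMeasure r) (integrable_const c),
    integral_natCast_poissonMeasure]
  simp

lemma variance_natCast_sub_poissonMeasure : Var[fun k : ℕ => k - c; Po(r)] = r := by
  rw [variance_sub_const .of_discrete, variance_natCast_poissonMeasure]

end PoissonMoments

section PoissonAbsoluteDeviation

variable (r : ℝ≥0) (c : ℝ)

lemma variance_abs_sub_poissonMeasure_le : Var[fun k : ℕ => |k - c|; Po(r)] ≤ r :=
  (variance_abs_le (memLp_two_natCast_sub_poissonMeasure r c)).trans_eq
    (variance_natCast_sub_poissonMeasure r c)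

lemma abs_sub_le_integral_abs_sub_poissonMeasure : |r - c| ≤ ∫ k : ℕ, |k - c| ∂Po(r) := by
  rw [← integral_natCast_sub_poissonMeasure]
  exact abs_integral_le_integral_abs

variable {c}

lemma integral_abs_sub_poissonMeasure_le_add (hc : 0 ≤ c) : ∫ k : ℕ, |k - c| ∂Po(r) ≤ r + c := by
  calc ∫ k : ℕ, |k - c| ∂Po(r)
    _ ≤ ∫ k : ℕ, (k - -c) ∂Po(r) := by
        refine integral_mono ((memLp_two_natCast_sub_poissonMeasure r c).integrable one_le_two).abs
          ((memLp_two_natCast_sub_poissonMeasure r (-c)).integrable one_le_two) fun k => ?_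
        rw [abs_le]
        constructor <;> linarith [k.cast_nonneg (α := ℝ)]
    _ = r + c := by rw [integral_natCast_sub_poissonMeasure, sub_neg_eq_add]

lemma integral_abs_sub_poissonMeasure_le_of_one_le (hc : 1 ≤ c) :
    ∫ k : ℕ, |k - c| ∂Po(r) ≤ |r - c| + 2 * √c := by
  have h_sqrt : 1 ≤ √c := one_le_sqrt.2 hc
  have h_rate : r ≤ √c * |r - c| + √c ^ 2 := by
    rw [sq_sqrt (by linarith)]
    nlinarith [le_abs_self (r - c), abs_nonneg (r - c)]
  have h_moment := sq_integral_abs_le (memLp_two_natCast_sub_poissonMeasure r c)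
  rw [variance_natCast_sub_poissonMeasure, integral_natCast_sub_poissonMeasure,
    ← sq_abs (r - c)] at h_moment
  refine le_of_sq_le_sq ?_ (by positivity)
  nlinarith [mul_nonneg (sqrt_nonneg c) (abs_nonneg (r - c))]

lemma integral_abs_sub_poissonMeasure_le (hc : 0 ≤ c) :
    ∫ k : ℕ, |k - c| ∂Po(r) ≤ |r - c| + 2 * min c √c := by
  rcases le_total c 1 with hc1 | hc1
  · rw [min_eq_left (le_sqrt_of_sq_le (pow_le_of_le_one hc hc1 two_ne_zero))]
    linarith [integral_abs_sub_poissonMeasure_le_add r hc, le_abs_self (r - c)]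
  · rw [min_eq_right (sqrt_le_self_iff.2 (.inr hc1))]
    exact integral_abs_sub_poissonMeasure_le_of_one_le r hc1

lemma two_mul_poissonMeasure_real_le_integral_abs_sub (k : ℕ) :
    2 * (r * Po(r).real {k}) ≤ ∫ j : ℕ, |(j : ℝ) - r| ∂Po(r) := by
  have h_int : Integrable (fun j : ℕ => (r : ℝ) - j) Po(r) :=
    (integrable_const _).sub (integrable_natCast_poissonMeasure r)
  have h_mean : ∫ j : ℕ, ((r : ℝ) - j) ∂Po(r) = 0 := by
    rw [integral_sub (integrable_const _) (integrable_natCast_poissonMeasure r),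
      integral_natCast_poissonMeasure]
    simp
  have h_tail : ∫ j : ℕ in (Finset.range (k + 1) : Set ℕ), ((r : ℝ) - j) ∂Po(r) =
      r * Po(r).real {k} := by
    rw [setIntegral_finset _ h_int.integrableOn]
    exact sum_range_poissonMeasure_real_mul_sub r k
  simpa only [h_tail, abs_sub_comm] using
    two_mul_setIntegral_le_integral_abs (Finset.range (k + 1)).measurableSet h_int h_mean

end PoissonAbsoluteDeviation

section Stirling

lemma log_factorial_le_stirling {n : ℕ} (hn : n ≠ 0) :
    log n ! ≤ n * log n - n + log n / 2 + 1 := by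
  obtain ⟨m, rfl⟩ := Nat.exists_eq_succ_of_ne_zero hn
  have h_stirling := Stirling.log_stirlingSeq'_antitone m.zero_le
  simp only [Function.comp_apply, Stirling.log_stirlingSeq_formula, Nat.succ_eq_add_one, zero_add]
    at h_stirling
  rw [log_div (by positivity) (by positivity), log_mul two_ne_zero (by positivity), log_exp]
    at h_stirling
  norm_num at h_stirling ⊢
  linarith

lemma log_factorial_le_of_mem_Icc {k : ℕ} (hk : k ≠ 0) {r : ℝ} (hr : r ∈ Set.Icc (k : ℝ) (k + 1)) :
    log k ! ≤ (k + 1 / 2) * log r - r + 1 := by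
  have hk0 : (0 : ℝ) < k := by positivity
  -- A concave function on `[k, k + 1]` is minimal at an endpoint, where Stirling's bound applies.
  have h_concave : ConcaveOn ℝ (Set.Ioi 0) fun x => (k + 1 / 2 : ℝ) * log x - x :=
    (strictConcaveOn_log_Ioi.concaveOn.smul (by positivity)).sub (convexOn_id (convex_Ioi 0))
  have h_left : log k ! - 1 ≤ (k + 1 / 2) * log k - k := by
    linarith [log_factorial_le_stirling hk]
  have h_right : log k ! - 1 ≤ (k + 1 / 2) * log (k + 1) - (k + 1) := by
    have h := log_factorial_le_stirling k.succ_ne_zero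
    rw [Nat.factorial_succ] at h
    push_cast at h
    rw [log_mul (by positivity) (by positivity)] at h
    linarith
  have h_min := h_concave.min_le_of_mem_Icc hk0 (Set.mem_Ioi.2 (by positivity)) hr
  linarith [le_min h_left h_right]

end Stirling

section PoissonMode

variable {r : ℝ≥0}

lemma exp_neg_one_mul_sqrt_le_mul_poissonMeasure_floor (hr : 1 ≤ r) :
    exp (-1) * √r ≤ r * Po(r).real {⌊r⌋₊} := by
  have hr0 : (0 : ℝ) < r := by positivity
  have h_log := log_factorial_le_of_mem_Icc (Nat.floor_pos.2 hr).ne'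
    (r := r) ⟨mod_cast Nat.floor_le r.2, mod_cast (Nat.lt_floor_add_one r).le⟩
  rw [poissonMeasure_real_singleton, ← log_le_log_iff (by positivity) (by positivity),
    log_mul (by positivity) (by positivity), log_exp, log_sqrt hr0.le,
    log_mul (by positivity) (by positivity), log_div (by positivity) (by positivity),
    log_mul (by positivity) (by positivity), log_exp, log_pow]
  linarith

lemma exists_exp_neg_one_mul_min_sqrt_le_mul_poissonMeasure (r : ℝ≥0) :
    ∃ k, exp (-1) * min (r : ℝ) √r ≤ r * Po(r).real {k} := by
  rcases le_total r 1 with hr | hr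
  · refine ⟨0, ?_⟩
    have h_exp : exp (-1) ≤ exp (-r) := exp_le_exp.2 (neg_le_neg (mod_cast hr))
    calc exp (-1) * min (r : ℝ) √r
      _ ≤ exp (-r) * r := by gcongr; exact min_le_left _ _
      _ = r * Po(r).real {0} := by simp [poissonMeasure_real_singleton, mul_comm]
  · exact ⟨⌊r⌋₊, (by gcongr; exact min_le_right _ _ : _ ≤ exp (-1) * √r).trans
      (exp_neg_one_mul_sqrt_le_mul_poissonMeasure_floor hr)⟩

lemma two_mul_exp_neg_one_mul_min_sqrt_le_integral_abs_sub (r : ℝ≥0) :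
    2 * exp (-1) * min (r : ℝ) √r ≤ ∫ k : ℕ, |(k : ℝ) - r| ∂Po(r) := by
  obtain ⟨k, hk⟩ := exists_exp_neg_one_mul_min_sqrt_le_mul_poissonMeasure r
  linarith [two_mul_poissonMeasure_real_le_integral_abs_sub r k]

end PoissonMode

section Risk

variable {S n : ℕ} {p q : Fin S → ℝ}

lemma ofReal_prodPMF (n : ℕ) (p : Fin S → ℝ≥0) (x : Fin S → ℕ) :
    ENNReal.ofReal (prodPMF n (fun i => p i) x) = Measure.pi (fun i => Po(n * p i)) {x} := by
  have h_nonneg i : 0 ≤ poissonPMF (n * p i) (x i) := by unfold poissonPMF; positivity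
  rw [Measure.pi_singleton, prodPMF, ENNReal.ofReal_prod_of_nonneg fun i _ => h_nonneg i]
  simp [poissonMeasure_singleton, poissonPMF]

lemma risk_eq_lintegral (n : ℕ) (p : Fin S → ℝ≥0) (L : ℝ) (est : (Fin S → ℕ) → ℝ) :
    risk n (fun i => p i) L est =
      ∫⁻ x, ENNReal.ofReal ((est x - L) ^ 2) ∂Measure.pi fun i => Po(n * p i) := by
  rw [lintegral_countable', risk]
  refine tsum_congr fun x => ?_
  rw [← ofReal_prodPMF, ENNReal.ofReal_mul' (sq_nonneg _), mul_comm]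

lemma mleEst_sub_L1dist (hn : n ≠ 0) (p q : Fin S → ℝ) (x : Fin S → ℕ) :
    mleEst n q x - L1dist p q =
      (∑ i, |x i - n * q i| - ∑ i, |n * p i - n * q i|) / n := by
  have hn0 : (0 : ℝ) < n := by positivity
  have h_scale (a b : ℝ) : |a - b| = |n * a - n * b| / n := by
    rw [← mul_sub, abs_mul, abs_of_pos hn0, mul_div_cancel_left₀ _ hn0.ne']
  simp only [mleEst, L1dist, h_scale _ (q _), mul_div_cancel₀ _ hn0.ne', ← Finset.sum_div, sub_div]

lemma risk_mleEst (hn : n ≠ 0) (p : Fin S → ℝ≥0) (q : Fin S → ℝ) :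
    risk n (fun i => p i) (L1dist (fun i => p i) q) (mleEst n q) = ENNReal.ofReal
      ((∑ i, Var[fun k : ℕ => |k - n * q i|; Po(n * p i)] +
        (∑ i, (∫ k : ℕ, |k - n * q i| ∂Po(n * p i) - |n * p i - n * q i|)) ^ 2) / n ^ 2) := by
  have h_coord i : MemLp (fun k : ℕ => |k - n * q i|) 2 Po(n * p i) :=
    (memLp_two_natCast_sub_poissonMeasure _ _).abs
  have h_int : Integrable (fun x : Fin S → ℕ =>
      (∑ i, |x i - n * q i| - ∑ i, |n * p i - n * q i|) ^ 2 / n ^ 2)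
      (Measure.pi fun i => Po(n * p i)) :=
    ((memLp_pi_sum h_coord).sub (memLp_const _)).integrable_sq.div_const _
  simp only [risk_eq_lintegral, mleEst_sub_L1dist hn, div_pow]
  rw [← ofReal_integral_eq_lintegral_ofReal h_int (.of_forall fun x => by positivity),
    integral_div, integral_pi_sum_sub_const_sq h_coord, Finset.sum_sub_distrib]

lemma risk_mleEst_le (hn : n ≠ 0) (hp : ∀ i, 0 ≤ p i) (hq : ∀ i, 0 ≤ q i) :
    risk n p (L1dist p q) (mleEst n q) ≤
      ENNReal.ofReal (4 * (∑ i, min (q i) √(q i / n)) ^ 2 + (∑ i, p i) / n) := by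
  lift p to Fin S → ℝ≥0 using hp
  have hn0 : (0 : ℝ) < n := by positivity
  rw [risk_mleEst hn]
  refine ENNReal.ofReal_le_ofReal ?_
  have h_var : ∑ i, Var[fun k : ℕ => |k - n * q i|; Po(n * p i)] ≤ n * ∑ i, (p i : ℝ) := by
    rw [Finset.mul_sum]
    exact Finset.sum_le_sum fun i _ => variance_abs_sub_poissonMeasure_le _ _
  have h_bias_nonneg : 0 ≤ ∑ i, (∫ k : ℕ, |k - n * q i| ∂Po(n * p i) - |n * p i - n * q i|) :=
    Finset.sum_nonneg fun i _ => sub_nonneg.2 <|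
      mod_cast abs_sub_le_integral_abs_sub_poissonMeasure (n * p i) (n * q i)
  have h_bias : ∑ i, (∫ k : ℕ, |k - n * q i| ∂Po(n * p i) - |n * p i - n * q i|) ≤
      2 * (n * ∑ i, min (q i) √(q i / n)) := by
    simp only [Finset.mul_sum, mul_min_sqrt_div hn0.le]
    exact Finset.sum_le_sum fun i _ => sub_le_iff_le_add'.2
      (integral_abs_sub_poissonMeasure_le _ (mul_nonneg hn0.le (hq i)))
  calc _ ≤ (n * ∑ i, (p i : ℝ) + (2 * (n * ∑ i, min (q i) √(q i / n))) ^ 2) / n ^ 2 := by gcongr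
    _ = 4 * (∑ i, min (q i) √(q i / n)) ^ 2 + (∑ i, (p i : ℝ)) / n := by
        field_simp
        ring

lemma le_risk_mleEst_self (hn : n ≠ 0) (hq : ∀ i, 0 ≤ q i) :
    ENNReal.ofReal (1 / 2 * (∑ i, min (q i) √(q i / n)) ^ 2) ≤
      risk n q (L1dist q q) (mleEst n q) := by
  lift q to Fin S → ℝ≥0 using hq
  have hn0 : (0 : ℝ) < n := by positivity
  have h_deviation : 2 * exp (-1) * (n * ∑ i, min (q i : ℝ) √(q i / n)) ≤
      ∑ i, ∫ k : ℕ, |(k : ℝ) - n * q i| ∂Po(n * q i) := by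
    simp only [Finset.mul_sum, mul_min_sqrt_div hn0.le]
    exact Finset.sum_le_sum fun i _ =>
      mod_cast two_mul_exp_neg_one_mul_min_sqrt_le_integral_abs_sub (n * q i)
  rw [risk_mleEst hn]
  simp only [sub_self, abs_zero, sub_zero]
  refine ENNReal.ofReal_le_ofReal ?_
  calc 1 / 2 * (∑ i, min (q i : ℝ) √(q i / n)) ^ 2
    _ ≤ (2 * exp (-1)) ^ 2 * (∑ i, min (q i : ℝ) √(q i / n)) ^ 2 := by
        gcongr; exact half_le_sq_two_mul_exp_neg_one
    _ = (2 * exp (-1) * (n * ∑ i, min (q i : ℝ) √(q i / n))) ^ 2 / n ^ 2 := by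
        field_simp
    _ ≤ (∑ i, ∫ k : ℕ, |(k : ℝ) - n * q i| ∂Po(n * q i)) ^ 2 / n ^ 2 := by gcongr
    _ ≤ _ := by
        gcongr
        exact le_add_of_nonneg_left (Finset.sum_nonneg fun i _ => variance_nonneg _ _)

end Risk

/-- risk bounds for the MLE `L₁(P_n, Q)` with `Q` known. -/
theorem mle_risk_bounds (S n : ℕ) (hS : 0 < S) (hn : 0 < n)
    (q : Fin S → ℝ) (hq : IsDist q) :
    (⨆ p : {p : Fin S → ℝ // IsDist p}, risk n p.1 (L1dist p.1 q) (mleEst n q)) ≤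
      ENNReal.ofReal (4 * (∑ i, min (q i) (Real.sqrt (q i / n))) ^ 2 + 1 / n) ∧
    ENNReal.ofReal ((1 / 2) * (∑ i, min (q i) (Real.sqrt (q i / n))) ^ 2) ≤
      ⨆ p : {p : Fin S → ℝ // IsDist p}, risk n p.1 (L1dist p.1 q) (mleEst n q) := by
  constructor
  · refine iSup_le fun ⟨p, hp⟩ => ?_
    simpa only [hp.2] using risk_mleEst_le hn.ne' hp.1 hq.1
  · exact le_iSup_of_le ⟨q, hq⟩ (le_risk_mleEst_self hn.ne' hq.1)
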